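/- arXiv:1212.3462 — 2 statements merged into one kernel-verified Lean document; each statement's English description precedes it below -/
import Mathlib

section
/- The deformed involution J: f ↦ f* is an antiunitary operator from the GNS Hilbert space ℋ to L²(ℝ²): it is antilinear, bijective onto a dense subspace extending to all of L²(ℝ²), and satisfies (Jf, Jg)_{L²} = (g, f)_ℋ. -/
open MeasureTheory Complex

/-- Fourier transform in the first variable:
(𝓕₀f)(p₀, x₁) = ∫ e^{-ip₀y₀} f(y₀, x₁) dy₀. -/
noncomputable def F0 (f : ℝ × ℝ → ℂ) : ℝ × ℝ → ℂ :=
  fun p => ∫ y0 : ℝ, Complex.exp (-Complex.I * (p.1 : ℂ) * (y0 : ℂ)) * f (y0, p.2)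

/-- The deformed (star) product of κ-Minkowski:
(f ⋆ g)(x) = (2π)⁻¹ ∫ e^{ip₀x₀} (𝓕₀f)(p₀,x₁) g(x₀, e^{-λp₀}x₁) dp₀. -/
noncomputable def sprod (lam : ℝ) (f g : ℝ × ℝ → ℂ) : ℝ × ℝ → ℂ :=
  fun x => (2 * Real.pi)⁻¹ • ∫ p0 : ℝ,
    Complex.exp (Complex.I * (p0 : ℂ) * (x.1 : ℂ)) * F0 f (p0, x.2)
      * g (x.1, Real.exp (-lam * p0) * x.2)

/-- The deformed involution:
f*(x) = (2π)⁻¹ ∫ e^{ip₀x₀} (𝓕₀ conj f)(p₀, e^{-λp₀}x₁) dp₀. -/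
noncomputable def sinv (lam : ℝ) (f : ℝ × ℝ → ℂ) : ℝ × ℝ → ℂ :=
  fun x => (2 * Real.pi)⁻¹ • ∫ p0 : ℝ,
    Complex.exp (Complex.I * (p0 : ℂ) * (x.1 : ℂ))
      * F0 (fun y => (starRingEnd ℂ) (f y)) (p0, Real.exp (-lam * p0) * x.2)

/-- Membership in the algebra 𝒜 = 𝓕(𝒮_c): f is the Fourier transform of a
Schwartz function with compact support in the first variable. -/
def InA (f : ℝ × ℝ → ℂ) : Prop :=
  ∃ h : SchwartzMap (ℝ × ℝ) ℂ,
    (∃ R : ℝ, ∀ p : ℝ × ℝ, R < |p.1| → h p = 0) ∧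
    ∀ x : ℝ × ℝ, f x = (2 * Real.pi)⁻¹ • ∫ p : ℝ × ℝ,
      Complex.exp (Complex.I * ((p.1 : ℂ) * (x.1 : ℂ) + (p.2 : ℂ) * (x.2 : ℂ))) * h p

/-- The invariant weight ω(f) = ∫ f(x) d²x. -/
noncomputable def omegaW (f : ℝ × ℝ → ℂ) : ℂ := ∫ x : ℝ × ℝ, f x

/-!
Write `f ∈ 𝒜` in the mixed representation `F0 f (p, y)`, momentum in the first variable and
position in the second. There the involution reads `F0 f* (p, y) = conj (F0 f (-p, e^{-λp} y))`,
and in full momentum space it becomes `h*(p) = e^{λp₀} conj (h (-p₀, -e^{λp₀} p₁))`, an antilinear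
involution of the Schwartz functions supported in a strip `|p₀| ≤ R`; so `J` is an antilinear
involution of `𝒜`. One use of Fubini gives
`ω(g* ⋆ f) = (2π)⁻¹ ∫ F0 g* (p, y) F0 f (-p, e^{-λp} y)`, whose second factor is
`conj (F0 f* (p, y))`: this is Parseval's expression for `(f*, g*)`. As `J` maps `𝒜` onto itself,
density of its range is density of `𝒜`, which follows from Plancherel and the density of `C_c^∞`.
-/

open Metric
open scoped ContDiff FourierTransform SchwartzMap

section General

lemma integral_prod_integral_rotate {α β γ E : Type*} [MeasurableSpace α] [MeasurableSpace β]
    [MeasurableSpace γ] [NormedAddCommGroup E] [NormedSpace ℝ E] {μ : Measure α} {ν : Measure β}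
    {ρ : Measure γ} [SFinite μ] [SFinite ν] [SFinite ρ] {f : α → β → γ → E}
    (hf : Integrable (fun y : α × γ × β => f y.1 y.2.2 y.2.1) (μ.prod (ρ.prod ν))) :
    ∫ x, ∫ c, f x.1 x.2 c ∂ρ ∂μ.prod ν = ∫ z, ∫ a, f a z.2 z.1 ∂μ ∂ρ.prod ν := by
  let e : α × γ × β ≃ᵐ (α × β) × γ :=
    ((MeasurableEquiv.refl α).prodCongr MeasurableEquiv.prodComm).trans
      MeasurableEquiv.prodAssoc.symm
  have he : MeasurePreserving e (μ.prod (ρ.prod ν)) ((μ.prod ν).prod ρ) :=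
    ((measurePreserving_prodAssoc μ ν ρ).symm _).comp
      ((MeasurePreserving.id μ).prod Measure.measurePreserving_swap)
  have hfe : Integrable (fun w : (α × β) × γ => f w.1.1 w.1.2 w.2) ((μ.prod ν).prod ρ) :=
    (he.integrable_comp_emb e.measurableEmbedding).1 hf
  calc ∫ x, ∫ c, f x.1 x.2 c ∂ρ ∂μ.prod ν
      = ∫ w, f w.1.1 w.1.2 w.2 ∂(μ.prod ν).prod ρ := (integral_prod _ hfe).symm
    _ = ∫ y, f y.1 y.2.2 y.2.1 ∂μ.prod (ρ.prod ν) :=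
      (he.integral_comp e.measurableEmbedding _).symm
    _ = ∫ z, ∫ a, f a z.2 z.1 ∂μ ∂ρ.prod ν := integral_prod_symm _ hf

lemma eLpNorm_comp_const_smul {E F : Type*} [NormedAddCommGroup E] [NormedSpace ℝ E]
    [MeasurableSpace E] [BorelSpace E] [FiniteDimensional ℝ E] [NormedAddCommGroup F]
    (μ : Measure E) [μ.IsAddHaarMeasure] (f : E → F) {r : ℝ} (hr : r ≠ 0) {p : ENNReal}
    (hp : p ≠ ⊤) :
    eLpNorm (fun x => f (r • x)) p μ
      = ENNReal.ofReal |(r ^ Module.finrank ℝ E)⁻¹| ^ (1 / p).toReal * eLpNorm f p μ := by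
  have hemb : MeasurableEmbedding (fun x : E => r • x) := measurableEmbedding_const_smul₀ hr
  rw [← smul_eq_mul, ← eLpNorm_smul_measure_of_ne_top hp, ← Measure.map_addHaar_smul μ hr,
    hemb.eLpNorm_map_measure]
  rfl

lemma eLpNorm_two_smul_comp_const_smul_of_finrank_eq_two {E F : Type*} [NormedAddCommGroup E]
    [NormedSpace ℝ E] [MeasurableSpace E] [BorelSpace E] [FiniteDimensional ℝ E]
    [NormedAddCommGroup F] [NormedSpace ℝ F] (hE : Module.finrank ℝ E = 2) (μ : Measure E)
    [μ.IsAddHaarMeasure] (f : E → F) {r : ℝ} (hr : 0 < r) :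
    eLpNorm (r • fun x => f (r • x)) 2 μ = eLpNorm f 2 μ := by
  have hroot : ((r ^ 2)⁻¹) ^ (1 / 2 : ENNReal).toReal = r⁻¹ := by
    rw [ENNReal.toReal_div, ENNReal.toReal_one, ENNReal.toReal_ofNat, ← Real.sqrt_eq_rpow,
      Real.sqrt_inv, Real.sqrt_sq hr.le]
  have hscale : ‖r‖ₑ * ENNReal.ofReal |(r ^ 2)⁻¹| ^ (1 / 2 : ENNReal).toReal = 1 := by
    rw [abs_of_nonneg (by positivity),
      ENNReal.ofReal_rpow_of_nonneg (by positivity) (by positivity),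
      hroot, Real.enorm_of_nonneg hr.le, ← ENNReal.ofReal_mul hr.le, mul_inv_cancel₀ hr.ne',
      ENNReal.ofReal_one]
  rw [eLpNorm_const_smul, eLpNorm_comp_const_smul μ f hr.ne' ENNReal.ofNat_ne_top, hE, ← mul_assoc,
    hscale, one_mul]

lemma norm_cexp_I_mul_ofReal_mul_ofReal (a b : ℝ) : ‖Complex.exp (Complex.I * a * b)‖ = 1 := by
  rw [Complex.norm_exp]
  simp

lemma norm_cexp_neg_I_mul_ofReal_mul_ofReal (a b : ℝ) :
    ‖Complex.exp (-Complex.I * a * b)‖ = 1 := by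
  rw [Complex.norm_exp]
  simp

lemma integral_cexp_mul_integral_cexp_mul {g : ℝ → ℂ} (hgc : Continuous g) (hgi : Integrable g)
    (hG : Integrable fun t : ℝ => ∫ q : ℝ, Complex.exp (Complex.I * q * t) * g q) (p : ℝ) :
    ∫ t : ℝ, Complex.exp (-Complex.I * p * t)
      * ((2 * Real.pi)⁻¹ • ∫ q : ℝ, Complex.exp (Complex.I * q * t) * g q) = g p := by
  set G : ℝ → ℂ := fun t => ∫ q : ℝ, Complex.exp (Complex.I * q * t) * g q
  have hinv (s : ℝ) : 𝓕⁻ g s = G (2 * Real.pi * s) := by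
    rw [Real.fourierInv_eq']
    congr 1 with q
    rw [smul_eq_mul]
    congr 2
    simp only [RCLike.inner_apply, Real.ringHom_apply, ofReal_mul, ofReal_ofNat]
    ring
  have hfourier : Integrable (𝓕 g) := by
    have : 𝓕 g = fun s => G (2 * Real.pi * -s) := by
      ext s
      rw [← hinv, Real.fourierInv_eq_fourier_neg, neg_neg]
    rw [this]
    exact (hG.comp_mul_left' Real.two_pi_pos.ne').comp_neg
  calc ∫ t : ℝ, Complex.exp (-Complex.I * p * t) * ((2 * Real.pi)⁻¹ • G t)
      = (2 * Real.pi)⁻¹ • ∫ t : ℝ, Complex.exp (-Complex.I * p * t) * G t := by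
        simp_rw [mul_smul_comm, integral_smul]
    _ = ∫ s : ℝ, Complex.exp (-Complex.I * p * (2 * Real.pi * s : ℝ)) * G (2 * Real.pi * s) := by
        rw [Measure.integral_comp_mul_left (fun t : ℝ => Complex.exp (-Complex.I * p * t) * G t),
          abs_of_pos (inv_pos.2 Real.two_pi_pos)]
    _ = 𝓕 (𝓕⁻ g) p := by
        rw [Real.fourier_eq']
        congr 1 with s
        rw [hinv, smul_eq_mul]
        congr 2
        simp only [neg_mul, ofReal_mul, ofReal_ofNat, RCLike.inner_apply, Real.ringHom_apply,
          ofReal_neg, neg_inj]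
        ring
    _ = g p := by rw [hgc.fourier_fourierInv_eq hgi hfourier]

end General

section Schwartz

variable {D E F G : Type*} [NormedAddCommGroup D] [NormedSpace ℝ D]
  [NormedAddCommGroup E] [NormedSpace ℝ E] [NormedAddCommGroup F] [NormedSpace ℝ F]
  [NormedAddCommGroup G] [NormedSpace ℝ G]

lemma surjective_compCLMOfContinuousLinearEquiv [NormedSpace ℂ G] (e : D ≃L[ℝ] E) :
    Function.Surjective
      (SchwartzMap.compCLMOfContinuousLinearEquiv ℂ e : 𝓢(E, G) →L[ℂ] 𝓢(D, G)) := fun f => by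
  refine ⟨SchwartzMap.compCLMOfContinuousLinearEquiv ℂ e.symm f, ?_⟩
  ext x
  simp

lemma exists_norm_schwartzMap_le_mul_inv_one_add_sq (f : 𝓢(ℝ × ℝ, G)) :
    ∃ C : ℝ, 0 ≤ C ∧ ∀ a b : ℝ, ‖f (a, b)‖ ≤ C * ((1 + a ^ 2)⁻¹ * (1 + b ^ 2)⁻¹) := by
  obtain ⟨C, hC⟩ : ∃ C : ℝ, ∀ x, (1 + ‖x‖) ^ 4 * ‖f x‖ ≤ C := by
    have hdecay := SchwartzMap.one_add_le_sup_seminorm_apply (𝕜 := ℝ) (m := (4, 0)) le_rfl le_rfl f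
    simp only [norm_iteratedFDeriv_zero] at hdecay
    exact ⟨_, hdecay⟩
  refine ⟨C, (by positivity : (0 : ℝ) ≤ _).trans (hC 0), fun a b => ?_⟩
  have ha : 1 + a ^ 2 ≤ (1 + ‖(a, b)‖) ^ 2 := by
    nlinarith [norm_fst_le (a, b), Real.norm_eq_abs a, abs_nonneg a, sq_abs a]
  have hb : 1 + b ^ 2 ≤ (1 + ‖(a, b)‖) ^ 2 := by
    nlinarith [norm_snd_le (a, b), Real.norm_eq_abs b, abs_nonneg b, sq_abs b]
  rw [← mul_inv, ← div_eq_mul_inv, le_div_iff₀' (by positivity)]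
  calc (1 + a ^ 2) * (1 + b ^ 2) * ‖f (a, b)‖
      ≤ (1 + ‖(a, b)‖) ^ 2 * (1 + ‖(a, b)‖) ^ 2 * ‖f (a, b)‖ := by gcongr
    _ = (1 + ‖(a, b)‖) ^ 4 * ‖f (a, b)‖ := by ring
    _ ≤ C := hC (a, b)

lemma exists_norm_schwartzMap_le_inv_one_add_sq_fst (f : 𝓢(ℝ × ℝ, G)) :
    ∃ C : ℝ, ∀ x : ℝ × ℝ, ‖f x‖ ≤ C * (1 + x.1 ^ 2)⁻¹ := by
  obtain ⟨C, hC, hf⟩ := exists_norm_schwartzMap_le_mul_inv_one_add_sq f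
  refine ⟨C, fun x => (hf x.1 x.2).trans ?_⟩
  gcongr
  exact mul_le_of_le_one_right (by positivity)
    (inv_le_one_of_one_le₀ (le_add_of_nonneg_right (sq_nonneg _)))

lemma integrable_schwartzMap_slice_fst (f : 𝓢(ℝ × ℝ, G)) (b : ℝ) :
    Integrable fun a : ℝ => f (a, b) := by
  obtain ⟨C, hf⟩ := exists_norm_schwartzMap_le_inv_one_add_sq_fst f
  exact (integrable_inv_one_add_sq.const_mul C).mono'
    (f.continuous.comp (Continuous.prodMk_left b)).aestronglyMeasurable
    (.of_forall fun a => hf (a, b))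

lemma exists_hasTemperateGrowth_eqOn_closedBall [FiniteDimensional ℝ E] {g : E → ℝ}
    (hg : ContDiff ℝ ∞ g) (hpos : ∀ x, 0 < g x) (R : ℝ) :
    ∃ s : E → ℝ, s.HasTemperateGrowth ∧ (∃ δ > 0, ∀ x, δ ≤ s x) ∧
      Set.EqOn s g (closedBall 0 R) := by
  let χ : ContDiffBump (0 : E) := ⟨|R| + 1, |R| + 2, by positivity, by linarith⟩
  let s : E → ℝ := fun x => 1 + χ x * (g x - 1)
  have hsupp : HasCompactSupport fun x => χ x * (g x - 1) := χ.hasCompactSupport.mul_right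
  have hdiff : ContDiff ℝ ∞ fun x => χ x * (g x - 1) := χ.contDiff.mul (hg.sub contDiff_const)
  have hs_pos (x : E) : 0 < s x := by
    have hconvex : s x = (1 - χ x) + χ x * g x := by ring
    rcases (χ.nonneg (x := x)).eq_or_lt with h0 | h0
    · simp [hconvex, ← h0]
    · rw [hconvex]
      exact add_pos_of_nonneg_of_pos (sub_nonneg.2 χ.le_one) (mul_pos h0 (hpos x))
  obtain ⟨C, hC⟩ : ∃ C, ∀ x, ‖(s x)⁻¹ - 1‖ ≤ C :=
    (hsupp.comp_left (g := fun t => (1 + t)⁻¹ - 1) (by simp)).exists_bound_of_continuous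
      (((continuous_const.add hdiff.continuous).inv₀ fun x => (hs_pos x).ne').sub continuous_const)
  refine ⟨s, (Function.HasTemperateGrowth.const 1).add (hsupp.hasTemperateGrowth hdiff),
    ⟨(1 + C)⁻¹, ?_, fun x => ?_⟩, fun x hx => ?_⟩
  · have := (norm_nonneg _).trans (hC 0)
    positivity
  · rw [inv_le_comm₀ (by linarith [(norm_nonneg _).trans (hC 0)]) (hs_pos x)]
    linarith [(Real.le_norm_self _).trans (hC x)]
  · have : χ x = 1 := χ.one_of_mem_closedBall
      (closedBall_subset_closedBall ((le_abs_self R).trans (le_add_of_nonneg_right zero_le_one)) hx)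
    simp [s, this]

lemma exists_schwartzMap_comp_fiber_smul (f : 𝓢(E × F, G)) {s : E → ℝ}
    (hs : s.HasTemperateGrowth) {δ : ℝ} (hδ : 0 < δ) (hδs : ∀ x, δ ≤ s x) :
    ∃ k : 𝓢(E × F, G), ∀ p, k p = f (p.1, s p.1 • p.2) := by
  have hfst : Function.HasTemperateGrowth fun p : E × F => p.1 :=
    (ContinuousLinearMap.fst ℝ E F).hasTemperateGrowth
  have hsnd : Function.HasTemperateGrowth fun p : E × F => p.2 :=
    (ContinuousLinearMap.snd ℝ E F).hasTemperateGrowth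
  have hgrowth : Function.HasTemperateGrowth fun p : E × F => (p.1, s p.1 • p.2) := by
    convert ((ContinuousLinearMap.inl ℝ E F).hasTemperateGrowth.comp hfst).add
      ((ContinuousLinearMap.inr ℝ E F).hasTemperateGrowth.comp ((hs.comp hfst).smul hsnd)) using 1
    ext p <;> simp
  refine ⟨SchwartzMap.compCLM ℝ hgrowth ⟨1, 1 + δ⁻¹, fun p => ?_⟩ f, fun p => rfl⟩
  set r := ‖(p.1, s p.1 • p.2)‖
  have hp1 : ‖p.1‖ ≤ r := norm_fst_le (p.1, s p.1 • p.2)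
  have hp2 : ‖p.2‖ ≤ δ⁻¹ * r := by
    rw [inv_mul_eq_div, le_div_iff₀' hδ]
    calc δ * ‖p.2‖ ≤ ‖s p.1‖ * ‖p.2‖ := by
          gcongr
          exact (hδs _).trans (Real.le_norm_self _)
      _ = ‖s p.1 • p.2‖ := (norm_smul _ _).symm
      _ ≤ r := norm_snd_le (p.1, s p.1 • p.2)
  have hr : 0 ≤ r := norm_nonneg _
  have : 0 ≤ δ⁻¹ * r := by positivity
  have : 0 < δ⁻¹ := by positivity
  rw [pow_one, norm_prod_le_iff]
  constructor <;> nlinarith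

end Schwartz

section Fourier

/-- The inverse Fourier transform of the plane with kernel `(2π)⁻¹ e^{i(p₀x₀ + p₁x₁)}`, as an
operator on Schwartz functions. It is obtained from Mathlib's `𝓕⁻` on the Euclidean plane, whose
kernel is `e^{2πi(p₀x₀ + p₁x₁)}`, by a dilation. -/
noncomputable def planeFourierInv : 𝓢(ℝ × ℝ, ℂ) →L[ℂ] 𝓢(ℝ × ℝ, ℂ) :=
  ((2 * Real.pi)⁻¹ : ℝ) •
    (SchwartzMap.compCLMOfContinuousLinearEquiv ℂ (ContinuousLinearEquiv.smulLeft
        (Units.mk0 (2 * Real.pi)⁻¹ (inv_ne_zero Real.two_pi_pos.ne'))) ∘L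
      SchwartzMap.compCLMOfContinuousLinearEquiv ℂ
        (WithLp.prodContinuousLinearEquiv 2 ℝ ℝ ℝ).symm ∘L
      FourierTransform.fourierInvCLM ℂ 𝓢(WithLp 2 (ℝ × ℝ), ℂ) ∘L
      SchwartzMap.compCLMOfContinuousLinearEquiv ℂ (WithLp.prodContinuousLinearEquiv 2 ℝ ℝ ℝ))

lemma planeFourierInv_eq_fourierInv (h : 𝓢(ℝ × ℝ, ℂ)) (x : ℝ × ℝ) :
    planeFourierInv h x = (2 * Real.pi)⁻¹ •
      𝓕⁻ (SchwartzMap.compCLMOfContinuousLinearEquiv ℂ (WithLp.prodContinuousLinearEquiv 2 ℝ ℝ ℝ) h)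
        (WithLp.toLp 2 ((2 * Real.pi)⁻¹ • x)) :=
  rfl

lemma planeFourierInv_apply (h : 𝓢(ℝ × ℝ, ℂ)) (x : ℝ × ℝ) :
    planeFourierInv h x = (2 * Real.pi)⁻¹ • ∫ p : ℝ × ℝ,
      Complex.exp (Complex.I * ((p.1 : ℂ) * (x.1 : ℂ) + (p.2 : ℂ) * (x.2 : ℂ))) * h p := by
  rw [planeFourierInv_eq_fourierInv, SchwartzMap.fourierInv_coe, Real.fourierInv_eq',
    ← (WithLp.volume_preserving_toLp ℝ ℝ).integral_comp
      (MeasurableEquiv.toLp 2 (ℝ × ℝ)).measurableEmbedding]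
  congr 2 with p
  change _ * h p = _
  congr 2
  rw [WithLp.prod_inner_apply]
  have : (Real.pi : ℂ) ≠ 0 := mod_cast Real.pi_ne_zero
  simp only [mul_inv_rev, Prod.smul_fst, smul_eq_mul, RCLike.inner_apply, Real.ringHom_apply,
    Prod.smul_snd, ofReal_mul, ofReal_ofNat, ofReal_add, ofReal_inv]
  field_simp

lemma surjective_planeFourierInv : Function.Surjective planeFourierInv := by
  have hscale : Function.Surjective
      fun f : 𝓢(ℝ × ℝ, ℂ) => ((2 * Real.pi)⁻¹ : ℝ) • f :=
    (MulAction.bijective₀ (inv_ne_zero Real.two_pi_pos.ne')).2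
  have hfourier : Function.Surjective
      (FourierTransform.fourierInvCLM ℂ 𝓢(WithLp 2 (ℝ × ℝ), ℂ)) := fun f =>
    ⟨(𝓕 f : 𝓢(WithLp 2 (ℝ × ℝ), ℂ)), by
      rw [FourierTransform.fourierInvCLM_apply, FourierTransform.fourierInv_fourier_eq]⟩
  exact hscale.comp ((surjective_compCLMOfContinuousLinearEquiv _).comp
    ((surjective_compCLMOfContinuousLinearEquiv _).comp
      (hfourier.comp (surjective_compCLMOfContinuousLinearEquiv _))))

lemma eLpNorm_fourierInv {V H : Type*} [NormedAddCommGroup V] [InnerProductSpace ℝ V]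
    [FiniteDimensional ℝ V] [MeasurableSpace V] [BorelSpace V] [NormedAddCommGroup H]
    [InnerProductSpace ℂ H] [CompleteSpace H] (f : 𝓢(V, H)) :
    eLpNorm (𝓕⁻ f : 𝓢(V, H)) 2 volume = eLpNorm f 2 volume := by
  have h := SchwartzMap.norm_fourier_toL2_eq (𝓕⁻ f : 𝓢(V, H))
  rw [FourierTransform.fourier_fourierInv_eq, SchwartzMap.norm_toLp, SchwartzMap.norm_toLp,
    ENNReal.toReal_eq_toReal_iff' (SchwartzMap.eLpNorm_lt_top _ _ _).ne
      (SchwartzMap.eLpNorm_lt_top _ _ _).ne] at h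
  exact h.symm

lemma eLpNorm_planeFourierInv (h : 𝓢(ℝ × ℝ, ℂ)) :
    eLpNorm (planeFourierInv h) 2 volume = eLpNorm h 2 volume := by
  let k : 𝓢(WithLp 2 (ℝ × ℝ), ℂ) :=
    SchwartzMap.compCLMOfContinuousLinearEquiv ℂ (WithLp.prodContinuousLinearEquiv 2 ℝ ℝ ℝ) h
  let K : 𝓢(WithLp 2 (ℝ × ℝ), ℂ) := 𝓕⁻ k
  calc eLpNorm (planeFourierInv h) 2 volume
      = eLpNorm ((2 * Real.pi)⁻¹ • fun x => (⇑K ∘ WithLp.toLp 2) ((2 * Real.pi)⁻¹ • x))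
          2 volume := rfl
    _ = eLpNorm (⇑K ∘ WithLp.toLp 2) 2 volume :=
      eLpNorm_two_smul_comp_const_smul_of_finrank_eq_two (by simp) volume _ (by positivity)
    _ = eLpNorm K 2 volume :=
      eLpNorm_comp_measurePreserving K.continuous.aestronglyMeasurable
        (WithLp.volume_preserving_toLp ℝ ℝ)
    _ = eLpNorm (h ∘ WithLp.ofLp) 2 volume := eLpNorm_fourierInv k
    _ = eLpNorm h 2 volume :=
      eLpNorm_comp_measurePreserving h.continuous.aestronglyMeasurable
        (WithLp.volume_preserving_ofLp ℝ ℝ)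

lemma exists_hasCompactSupport_eLpNorm_sub_planeFourierInv_lt {ψ : ℝ × ℝ → ℂ}
    (hψ : MemLp ψ 2 volume) {ε : ℝ} (hε : 0 < ε) :
    ∃ k : 𝓢(ℝ × ℝ, ℂ), HasCompactSupport k ∧
      eLpNorm (fun x => ψ x - planeFourierInv k x) 2 volume < ENNReal.ofReal ε := by
  have happrox {φ : ℝ × ℝ → ℂ} (hφ : MemLp φ 2 volume) : ∃ k : 𝓢(ℝ × ℝ, ℂ),
      HasCompactSupport k ∧ eLpNorm (φ - ⇑k) 2 volume ≤ ENNReal.ofReal (ε / 3) := by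
    obtain ⟨g, hg_supp, hg_diff, hg⟩ :=
      hφ.exist_eLpNorm_sub_le (by simp) (by simp) (div_pos hε three_pos)
    exact ⟨hg_supp.toSchwartzMap hg_diff, hg_supp, hg⟩
  obtain ⟨F, -, hψF⟩ := happrox hψ
  obtain ⟨h, rfl⟩ := surjective_planeFourierInv F
  obtain ⟨k, hk, hhk⟩ := happrox (h.memLp 2 volume)
  refine ⟨k, hk, ?_⟩
  calc eLpNorm (fun x => ψ x - planeFourierInv k x) 2 volume
      = eLpNorm ((ψ - ⇑(planeFourierInv h)) + ⇑(planeFourierInv (h - k))) 2 volume := by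
        congr 1 with x
        simp
    _ ≤ eLpNorm (ψ - ⇑(planeFourierInv h)) 2 volume + eLpNorm (planeFourierInv (h - k)) 2 volume :=
        eLpNorm_add_le (hψ.1.sub (planeFourierInv h).continuous.aestronglyMeasurable)
          (planeFourierInv (h - k)).continuous.aestronglyMeasurable one_le_two
    _ ≤ ENNReal.ofReal (ε / 3) + ENNReal.ofReal (ε / 3) := by
        rw [eLpNorm_planeFourierInv]
        exact add_le_add hψF hhk
    _ < ENNReal.ofReal ε := by
        rw [← ENNReal.ofReal_add (by positivity) (by positivity), ENNReal.ofReal_lt_ofReal_iff hε]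
        linarith

end Fourier

section PartialFourier

lemma continuous_F0 (f : 𝓢(ℝ × ℝ, ℂ)) : Continuous (F0 f) := by
  obtain ⟨C, hC⟩ := exists_norm_schwartzMap_le_inv_one_add_sq_fst f
  have hf := f.continuous
  refine continuous_of_dominated (fun p => by fun_prop) (fun p => .of_forall fun t => ?_)
    (integrable_inv_one_add_sq.const_mul C) (.of_forall fun t => by fun_prop)
  rw [norm_mul, norm_cexp_neg_I_mul_ofReal_mul_ofReal, one_mul]
  exact hC (t, p.2)

lemma exists_norm_F0_le (f : 𝓢(ℝ × ℝ, ℂ)) :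
    ∃ C : ℝ, ∀ p : ℝ × ℝ, ‖F0 f p‖ ≤ C * (1 + p.2 ^ 2)⁻¹ := by
  obtain ⟨C, -, hC⟩ := exists_norm_schwartzMap_le_mul_inv_one_add_sq f
  refine ⟨C * Real.pi, fun p => ?_⟩
  calc ‖F0 f p‖ ≤ ∫ t : ℝ, C * (1 + p.2 ^ 2)⁻¹ * (1 + t ^ 2)⁻¹ := by
        refine norm_integral_le_of_norm_le (integrable_inv_one_add_sq.const_mul _)
          (.of_forall fun t => ?_)
        rw [norm_mul, norm_cexp_neg_I_mul_ofReal_mul_ofReal, one_mul]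
        exact (hC t p.2).trans_eq (by ring)
    _ = C * Real.pi * (1 + p.2 ^ 2)⁻¹ := by
        rw [integral_const_mul, integral_univ_inv_one_add_sq]
        ring

lemma F0_neg (f : ℝ × ℝ → ℂ) (p y : ℝ) :
    F0 f (-p, y) = ∫ t : ℝ, Complex.exp (Complex.I * p * t) * f (t, y) := by
  simp [F0]

lemma F0_conj (f : ℝ × ℝ → ℂ) (p y : ℝ) :
    F0 (fun x => starRingEnd ℂ (f x)) (p, y) = starRingEnd ℂ (F0 f (-p, y)) := by
  rw [F0_neg, F0, ← integral_conj]
  congr 1 with t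
  rw [map_mul, ← Complex.exp_conj]
  simp

/-- The inverse Fourier transform, without the factor `(2π)⁻¹`, in the second variable. It takes
momentum space to the mixed representation reached from position space by `F0`. -/
noncomputable def partialFourierInv (h : ℝ × ℝ → ℂ) : ℝ × ℝ → ℂ :=
  fun x => ∫ q : ℝ, Complex.exp (Complex.I * (q : ℂ) * (x.2 : ℂ)) * h (x.1, q)

lemma partialFourierInv_eq_F0 (h : ℝ × ℝ → ℂ) (x : ℝ × ℝ) :
    partialFourierInv h x = F0 (fun y => h y.swap) (-x.2, x.1) := by
  rw [F0_neg]
  simp [partialFourierInv, mul_right_comm]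

lemma continuous_partialFourierInv (h : 𝓢(ℝ × ℝ, ℂ)) : Continuous (partialFourierInv h) := by
  rw [funext (partialFourierInv_eq_F0 h)]
  exact (continuous_F0 (SchwartzMap.compCLMOfContinuousLinearEquiv ℂ
    (ContinuousLinearEquiv.prodComm ℝ ℝ ℝ) h)).comp (by fun_prop)

lemma integrable_partialFourierInv (h : 𝓢(ℝ × ℝ, ℂ)) (y : ℝ) :
    Integrable fun p : ℝ => partialFourierInv h (p, y) := by
  obtain ⟨C, hC⟩ := exists_norm_F0_le (SchwartzMap.compCLMOfContinuousLinearEquiv ℂ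
    (ContinuousLinearEquiv.prodComm ℝ ℝ ℝ) h)
  refine (integrable_inv_one_add_sq.const_mul C).mono'
    ((continuous_partialFourierInv h).comp (Continuous.prodMk_left y)).aestronglyMeasurable
    (.of_forall fun p => ?_)
  rw [partialFourierInv_eq_F0]
  exact hC (-y, p)

lemma planeFourierInv_eq_integral_partialFourierInv (h : 𝓢(ℝ × ℝ, ℂ)) (x : ℝ × ℝ) :
    planeFourierInv h x = (2 * Real.pi)⁻¹ •
      ∫ p : ℝ, Complex.exp (Complex.I * p * x.1) * partialFourierInv h (p, x.2) := by
  have hkernel (p : ℝ × ℝ) :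
      Complex.exp (Complex.I * ((p.1 : ℂ) * (x.1 : ℂ) + (p.2 : ℂ) * (x.2 : ℂ))) * h p
        = Complex.exp (Complex.I * p.1 * x.1) * (Complex.exp (Complex.I * p.2 * x.2) * h p) := by
    rw [← mul_assoc, ← Complex.exp_add]
    ring_nf
  have hint : Integrable (fun p : ℝ × ℝ =>
      Complex.exp (Complex.I * p.1 * x.1) * (Complex.exp (Complex.I * p.2 * x.2) * h p))
      (volume.prod volume) := by
    have hh := h.continuous
    refine (h.integrable (μ := volume)).mono (by fun_prop) (.of_forall fun p => ?_)
    simp only [norm_mul, norm_cexp_I_mul_ofReal_mul_ofReal, one_mul, le_refl]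
  simp_rw [planeFourierInv_apply, hkernel, partialFourierInv, ← integral_const_mul]
  rw [Measure.volume_eq_prod, integral_prod _ hint]

lemma F0_planeFourierInv (h : 𝓢(ℝ × ℝ, ℂ)) : F0 (planeFourierInv h) = partialFourierInv h := by
  ext ⟨p, y⟩
  have hG : Integrable fun t : ℝ =>
      ∫ q : ℝ, Complex.exp (Complex.I * q * t) * partialFourierInv h (q, y) := by
    convert (integrable_schwartzMap_slice_fst (planeFourierInv h) y).smul (2 * Real.pi)
      using 2 with t
    rw [Pi.smul_apply, planeFourierInv_eq_integral_partialFourierInv,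
      smul_inv_smul₀ Real.two_pi_pos.ne']
  simp_rw [F0, planeFourierInv_eq_integral_partialFourierInv]
  exact integral_cexp_mul_integral_cexp_mul
    ((continuous_partialFourierInv h).comp (Continuous.prodMk_left y))
    (integrable_partialFourierInv h y) hG p

end PartialFourier

section MomentumStar

/-- The deformed involution in momentum space: if `f` is the inverse Fourier transform of `h`, then
`f*` is that of `momentumStar lam h`. -/
noncomputable def momentumStar (lam : ℝ) (h : ℝ × ℝ → ℂ) : ℝ × ℝ → ℂ :=
  fun p => Real.exp (lam * p.1) •
    starRingEnd ℂ (h (-p.1, -(Real.exp (lam * p.1) * p.2)))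

lemma momentumStar_momentumStar (lam : ℝ) (h : ℝ × ℝ → ℂ) :
    momentumStar lam (momentumStar lam h) = h := by
  ext p
  have hexp : Real.exp (lam * p.1) * Real.exp (lam * -p.1) = 1 := by
    rw [← Real.exp_add, mul_neg, add_neg_cancel, Real.exp_zero]
  have hsnd : -(Real.exp (lam * -p.1) * -(Real.exp (lam * p.1) * p.2)) = p.2 := by
    linear_combination p.2 * hexp
  simp only [momentumStar, neg_neg, hsnd, Complex.real_smul, map_mul, Complex.conj_conj,
    Complex.conj_ofReal]
  rw [← mul_assoc, ← Complex.ofReal_mul, hexp, Complex.ofReal_one, one_mul]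

lemma momentumStar_smul_add (lam : ℝ) (c : ℂ) (h k : ℝ × ℝ → ℂ) :
    momentumStar lam (c • h + k) = starRingEnd ℂ c • momentumStar lam h + momentumStar lam k := by
  ext p
  simp only [momentumStar, Pi.add_apply, Pi.smul_apply, smul_eq_mul, map_add, map_mul, smul_add,
    mul_smul_comm]

lemma partialFourierInv_momentumStar (lam : ℝ) (h : ℝ × ℝ → ℂ) (p y : ℝ) :
    partialFourierInv (momentumStar lam h) (p, y)
      = starRingEnd ℂ (partialFourierInv h (-p, Real.exp (-lam * p) * y)) := by
  set r : ℝ := Real.exp (lam * p)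
  have hr : 0 < r := Real.exp_pos _
  have hrinv : Real.exp (-lam * p) = r⁻¹ := by rw [neg_mul, Real.exp_neg]
  let Φ : ℝ → ℂ := fun q =>
    starRingEnd ℂ (Complex.exp (Complex.I * q * (r⁻¹ * y : ℝ)) * h (-p, q))
  calc partialFourierInv (momentumStar lam h) (p, y) = r • ∫ q : ℝ, Φ (-r * q) := by
        rw [partialFourierInv, ← integral_smul]
        congr 1 with q
        have hexp : Complex.exp (Complex.I * q * y)
            = starRingEnd ℂ (Complex.exp (Complex.I * (-r * q : ℝ) * (r⁻¹ * y : ℝ))) := by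
          have : (r : ℂ) ≠ 0 := mod_cast hr.ne'
          rw [← Complex.exp_conj]
          congr 1
          simp only [neg_mul, ofReal_neg, ofReal_mul, mul_neg, ofReal_inv, map_neg, map_mul, conj_I,
            conj_ofReal, map_inv₀, neg_neg]
          field_simp
        simp only [momentumStar, Φ, map_mul, hexp, mul_smul_comm, neg_mul, r]
    _ = ∫ q : ℝ, Φ q := by
        rw [Measure.integral_comp_mul_left, inv_neg, abs_neg, abs_of_pos (inv_pos.2 hr),
          smul_inv_smul₀ hr.ne']
    _ = starRingEnd ℂ (partialFourierInv h (-p, Real.exp (-lam * p) * y)) := by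
        rw [hrinv, partialFourierInv, ← integral_conj]

lemma sinv_planeFourierInv {lam : ℝ} {h k : 𝓢(ℝ × ℝ, ℂ)} (hk : ⇑k = momentumStar lam h) :
    sinv lam (planeFourierInv h) = planeFourierInv k := by
  ext x
  simp_rw [planeFourierInv_eq_integral_partialFourierInv, sinv, F0_conj, F0_planeFourierInv, hk,
    partialFourierInv_momentumStar]

/-- A function on momentum space has compact support in `p₀`, uniformly in `p₁`; these are the
functions whose inverse Fourier transforms form the algebra. -/
def StripSupported (h : ℝ × ℝ → ℂ) : Prop :=
  ∃ R : ℝ, ∀ p : ℝ × ℝ, R < |p.1| → h p = 0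

lemma stripSupported_of_hasCompactSupport {h : ℝ × ℝ → ℂ} (hh : HasCompactSupport h) :
    StripSupported h := by
  obtain ⟨R, hR⟩ := hh.isCompact.isBounded.exists_norm_le
  refine ⟨R, fun p hp => ?_⟩
  by_contra hne
  exact hp.not_ge ((norm_fst_le p).trans (hR p (subset_tsupport _ hne)))

lemma stripSupported_momentumStar {h : ℝ × ℝ → ℂ} (hh : StripSupported h) (lam : ℝ) :
    StripSupported (momentumStar lam h) := by
  obtain ⟨R, hR⟩ := hh
  refine ⟨R, fun p hp => ?_⟩
  rw [momentumStar, hR _ (by rwa [abs_neg]), map_zero, smul_zero]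

lemma StripSupported.smul_add {h k : ℝ × ℝ → ℂ} (hh : StripSupported h) (hk : StripSupported k)
    (c : ℂ) : StripSupported (c • h + k) := by
  obtain ⟨R, hR⟩ := hh
  obtain ⟨S, hS⟩ := hk
  refine ⟨max R S, fun p hp => ?_⟩
  rw [Pi.add_apply, Pi.smul_apply, hR p ((le_max_left R S).trans_lt hp),
    hS p ((le_max_right R S).trans_lt hp), smul_zero, add_zero]

-- The factor `exp (lam * p.1)` is not of temperate growth, but it may be cut off outside the strip.
lemma exists_schwartzMap_eq_momentumStar {h : 𝓢(ℝ × ℝ, ℂ)} (hh : StripSupported h)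
    (lam : ℝ) : ∃ k : 𝓢(ℝ × ℝ, ℂ), ⇑k = momentumStar lam h := by
  obtain ⟨R, hR⟩ := hh
  obtain ⟨s, hs, ⟨δ, hδ, hδs⟩, hsexp⟩ := exists_hasTemperateGrowth_eqOn_closedBall
    (g := fun t : ℝ => Real.exp (lam * t)) (by fun_prop) (fun t => Real.exp_pos _) R
  obtain ⟨k, hk⟩ := exists_schwartzMap_comp_fiber_smul
    (SchwartzMap.compCLMOfContinuousLinearEquiv ℂ (ContinuousLinearEquiv.neg ℝ) h) hs hδ hδs
  have hs_fst : Function.HasTemperateGrowth fun p : ℝ × ℝ => s p.1 :=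
    hs.comp (ContinuousLinearMap.fst ℝ ℝ ℝ).hasTemperateGrowth
  refine ⟨SchwartzMap.smulLeftCLM ℂ (fun p : ℝ × ℝ => s p.1)
    (SchwartzMap.postcompCLM (𝕜 := ℝ) Complex.conjCLE.toContinuousLinearMap k), ?_⟩
  ext p
  rw [SchwartzMap.smulLeftCLM_apply_apply hs_fst, SchwartzMap.postcompCLM_apply, hk]
  change s p.1 • starRingEnd ℂ (h (-p.1, -(s p.1 * p.2)))
    = Real.exp (lam * p.1) • starRingEnd ℂ (h (-p.1, -(Real.exp (lam * p.1) * p.2)))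
  rcases le_or_gt |p.1| R with hp | hp
  · rw [hsexp (mem_closedBall_zero_iff.2 hp)]
  · rw [hR _ (by rwa [abs_neg]), hR _ (by rwa [abs_neg]), map_zero, smul_zero, smul_zero]

end MomentumStar

section Algebra

variable {f g : ℝ × ℝ → ℂ}

lemma inA_iff_exists_planeFourierInv :
    InA f ↔ ∃ h : 𝓢(ℝ × ℝ, ℂ), StripSupported h ∧ f = planeFourierInv h := by
  simp only [InA, funext_iff, planeFourierInv_apply, StripSupported]

lemma InA.exists_planeFourierInv_momentumStar (hf : InA f) (lam : ℝ) :
    ∃ h k : 𝓢(ℝ × ℝ, ℂ), StripSupported h ∧ ⇑k = momentumStar lam h ∧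
      f = planeFourierInv h ∧ sinv lam f = planeFourierInv k := by
  obtain ⟨h, hh, rfl⟩ := inA_iff_exists_planeFourierInv.1 hf
  obtain ⟨k, hk⟩ := exists_schwartzMap_eq_momentumStar hh lam
  exact ⟨h, k, hh, hk, rfl, sinv_planeFourierInv hk⟩

lemma InA.exists_schwartzMap (hf : InA f) : ∃ F : 𝓢(ℝ × ℝ, ℂ), ⇑F = f := by
  obtain ⟨h, -, rfl⟩ := inA_iff_exists_planeFourierInv.1 hf
  exact ⟨_, rfl⟩

lemma inA_sinv (hf : InA f) (lam : ℝ) : InA (sinv lam f) := by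
  obtain ⟨h, k, hh, hk, -, hfk⟩ := hf.exists_planeFourierInv_momentumStar lam
  exact inA_iff_exists_planeFourierInv.2 ⟨k, hk ▸ stripSupported_momentumStar hh lam, hfk⟩

lemma InA.sinv_sinv (hf : InA f) (lam : ℝ) : sinv lam (sinv lam f) = f := by
  obtain ⟨h, k, -, hk, rfl, hfk⟩ := hf.exists_planeFourierInv_momentumStar lam
  have hhk : ⇑h = momentumStar lam k := by rw [hk, momentumStar_momentumStar]
  rw [hfk, sinv_planeFourierInv hhk]

lemma InA.sinv_const_mul_add (hf : InA f) (hg : InA g) (lam : ℝ) (c : ℂ) :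
    sinv lam (fun x => c * f x + g x)
      = fun x => starRingEnd ℂ c * sinv lam f x + sinv lam g x := by
  obtain ⟨h, h', -, hh', rfl, hf'⟩ := hf.exists_planeFourierInv_momentumStar lam
  obtain ⟨k, k', -, hk', rfl, hg'⟩ := hg.exists_planeFourierInv_momentumStar lam
  have hlinear (a : ℂ) (u v : 𝓢(ℝ × ℝ, ℂ)) :
      (fun x => a * planeFourierInv u x + planeFourierInv v x) = planeFourierInv (a • u + v) := by
    rw [map_add, map_smul]
    rfl
  have hstar : ⇑(starRingEnd ℂ c • h' + k') = momentumStar lam ⇑(c • h + k) :=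
    (congrArg₂ (fun u v => starRingEnd ℂ c • u + v) hh' hk').trans
      (momentumStar_smul_add lam c h k).symm
  rw [hlinear, sinv_planeFourierInv hstar, hf', hg', hlinear]

lemma InA.eq_integral_cexp_mul_F0 (hf : InA f) (x : ℝ × ℝ) :
    f x = (2 * Real.pi)⁻¹ • ∫ p : ℝ, Complex.exp (Complex.I * p * x.1) * F0 f (p, x.2) := by
  obtain ⟨h, -, rfl⟩ := inA_iff_exists_planeFourierInv.1 hf
  rw [F0_planeFourierInv, planeFourierInv_eq_integral_partialFourierInv]

lemma InA.F0_sinv (hf : InA f) (lam p y : ℝ) :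
    F0 (sinv lam f) (p, y) = starRingEnd ℂ (F0 f (-p, Real.exp (-lam * p) * y)) := by
  obtain ⟨h, k, -, hk, rfl, hfk⟩ := hf.exists_planeFourierInv_momentumStar lam
  rw [hfk, F0_planeFourierInv, F0_planeFourierInv, hk, partialFourierInv_momentumStar]

lemma InA.integrable_F0 (hf : InA f) : Integrable (F0 f) := by
  obtain ⟨h, ⟨R, hR⟩, rfl⟩ := inA_iff_exists_planeFourierInv.1 hf
  obtain ⟨C, hC⟩ := exists_norm_F0_le (planeFourierInv h)
  have hbound : Integrable (fun p : ℝ × ℝ =>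
      (Set.Icc (-R) R).indicator (fun _ => C) p.1 * (1 + p.2 ^ 2)⁻¹) (volume.prod volume) :=
    ((integrable_indicator_iff measurableSet_Icc).2 (integrableOn_const (by simp))).mul_prod
      integrable_inv_one_add_sq
  refine hbound.mono' (continuous_F0 _).aestronglyMeasurable (.of_forall fun p => ?_)
  by_cases hp : p.1 ∈ Set.Icc (-R) R
  · simpa only [Set.indicator_of_mem hp] using hC p
  · have hzero (q : ℝ) : h (p.1, q) = 0 := hR _ (not_le.1 fun hle => hp (abs_le.1 hle))
    simp only [F0_planeFourierInv, partialFourierInv, hzero, mul_zero, integral_zero, norm_zero,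
      Set.indicator_of_notMem hp, zero_mul, le_refl]

end Algebra

section Antiunitary

lemma integral_sprod (lam : ℝ) {f g : ℝ × ℝ → ℂ} (hf : Integrable (F0 f)) (hg : Continuous g)
    {φ : ℝ → ℝ} (hφ : Integrable φ) (hgφ : ∀ x, ‖g x‖ ≤ φ x.1) :
    ∫ x, sprod lam f g x
      = (2 * Real.pi)⁻¹ • ∫ z : ℝ × ℝ, F0 f z * F0 g (-z.1, Real.exp (-lam * z.1) * z.2) := by
  have hint : Integrable (fun y : ℝ × ℝ × ℝ => Complex.exp (Complex.I * (y.2.1 : ℂ) * (y.1 : ℂ))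
      * F0 f y.2 * g (y.1, Real.exp (-lam * y.2.1) * y.2.2))
      (volume.prod (volume.prod volume)) := by
    have hexp : Continuous fun y : ℝ × ℝ × ℝ =>
        Complex.exp (Complex.I * (y.2.1 : ℂ) * (y.1 : ℂ)) := by fun_prop
    have hg' : Continuous fun y : ℝ × ℝ × ℝ => g (y.1, Real.exp (-lam * y.2.1) * y.2.2) := by
      fun_prop
    refine (hφ.mul_prod hf.norm).mono'
      ((hexp.aestronglyMeasurable.mul hf.1.comp_snd).mul hg'.aestronglyMeasurable)
      (.of_forall fun y => ?_)
    rw [norm_mul, norm_mul, norm_cexp_I_mul_ofReal_mul_ofReal, one_mul, mul_comm]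
    gcongr
    exact hgφ _
  simp_rw [sprod, integral_smul]
  congr 1
  calc ∫ x : ℝ × ℝ, ∫ p : ℝ, Complex.exp (Complex.I * p * x.1) * F0 f (p, x.2)
        * g (x.1, Real.exp (-lam * p) * x.2)
      = ∫ z : ℝ × ℝ, ∫ t : ℝ, Complex.exp (Complex.I * z.1 * t) * F0 f z
        * g (t, Real.exp (-lam * z.1) * z.2) :=
        integral_prod_integral_rotate (f := fun a b c : ℝ => Complex.exp (Complex.I * c * a)
          * F0 f (c, b) * g (a, Real.exp (-lam * c) * b)) hint
    _ = ∫ z : ℝ × ℝ, F0 f z * F0 g (-z.1, Real.exp (-lam * z.1) * z.2) := by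
        simp_rw [F0_neg, mul_comm _ (F0 f _), mul_assoc, integral_const_mul]

lemma InA.sprod_zero {f : ℝ × ℝ → ℂ} (hf : InA f) (g : ℝ × ℝ → ℂ) :
    sprod 0 f g = fun x => f x * g x := by
  ext1 x
  simp only [sprod, neg_zero, zero_mul, Real.exp_zero, one_mul, integral_mul_const]
  rw [← smul_mul_assoc, ← hf.eq_integral_cexp_mul_F0]

-- With `integral_sprod`, both sides become `(2π)⁻¹ ∫ F0 g* (p, y) F0 f (-p, e^{-λp} y)`: the left
-- one because the pointwise product is the star product at `λ = 0`.
lemma InA.integral_conj_sinv_mul_sinv {f g : ℝ × ℝ → ℂ} (hf : InA f) (hg : InA g) (lam : ℝ) :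
    ∫ x, starRingEnd ℂ (sinv lam f x) * sinv lam g x = omegaW (sprod lam (sinv lam g) f) := by
  obtain ⟨F, rfl⟩ := hf.exists_schwartzMap
  obtain ⟨G, hG⟩ := (inA_sinv hf lam).exists_schwartzMap
  obtain ⟨A, hA⟩ := exists_norm_schwartzMap_le_inv_one_add_sq_fst F
  obtain ⟨B, hB⟩ := exists_norm_schwartzMap_le_inv_one_add_sq_fst G
  have hg' : InA (sinv lam g) := inA_sinv hg lam
  calc ∫ x, starRingEnd ℂ (sinv lam F x) * sinv lam g x
      = ∫ x, sprod 0 (sinv lam g) (fun y => starRingEnd ℂ (G y)) x := by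
        simp_rw [hg'.sprod_zero, hG, mul_comm]
    _ = (2 * Real.pi)⁻¹ • ∫ z : ℝ × ℝ, F0 (sinv lam g) z * starRingEnd ℂ (F0 G z) := by
        have hGc : Continuous fun y => starRingEnd ℂ (G y) :=
          Complex.continuous_conj.comp G.continuous
        rw [integral_sprod 0 hg'.integrable_F0 hGc
          (integrable_inv_one_add_sq.const_mul B) fun x => (RCLike.norm_conj _).trans_le (hB x)]
        simp only [F0_conj, neg_neg, neg_zero, zero_mul, Real.exp_zero, one_mul]
    _ = (2 * Real.pi)⁻¹ • ∫ z : ℝ × ℝ,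
          F0 (sinv lam g) z * F0 F (-z.1, Real.exp (-lam * z.1) * z.2) := by
        congr 2 with z
        rw [hG, hf.F0_sinv, Complex.conj_conj]
    _ = omegaW (sprod lam (sinv lam g) F) :=
        (integral_sprod lam hg'.integrable_F0 F.continuous
          (integrable_inv_one_add_sq.const_mul A) hA).symm

lemma exists_inA_eLpNorm_sub_sinv_lt (lam : ℝ) {ψ : ℝ × ℝ → ℂ} (hψ : MemLp ψ 2 volume) {ε : ℝ}
    (hε : 0 < ε) :
    ∃ f, InA f ∧ eLpNorm (fun x => ψ x - sinv lam f x) 2 volume < ENNReal.ofReal ε := by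
  obtain ⟨k, hk, hψk⟩ := exists_hasCompactSupport_eLpNorm_sub_planeFourierInv_lt hψ hε
  have hA : InA (planeFourierInv k) :=
    inA_iff_exists_planeFourierInv.2 ⟨k, stripSupported_of_hasCompactSupport hk, rfl⟩
  exact ⟨sinv lam (planeFourierInv k), inA_sinv hA lam, by rwa [hA.sinv_sinv]⟩

end Antiunitary

theorem stmt10_general (lam : ℝ) :
    (∀ f g : ℝ × ℝ → ℂ, ∀ c : ℂ, InA f → InA g →
      sinv lam (fun x => c * f x + g x)
        = fun x => (starRingEnd ℂ) c * sinv lam f x + sinv lam g x) ∧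
    (∀ f g : ℝ × ℝ → ℂ, InA f → InA g →
      ∫ x : ℝ × ℝ, (starRingEnd ℂ) (sinv lam f x) * sinv lam g x
        = omegaW (sprod lam (sinv lam g) f)) ∧
    (∀ ψ : Lp ℂ 2 (volume : Measure (ℝ × ℝ)), ∀ ε : ℝ, 0 < ε →
      ∃ f : ℝ × ℝ → ℂ, InA f ∧
        eLpNorm (fun x => (ψ : ℝ × ℝ → ℂ) x - sinv lam f x) 2 volume
          < ENNReal.ofReal ε) :=
  ⟨fun _ _ c hf hg => hf.sinv_const_mul_add hg lam c,
    fun _ _ hf hg => hf.integral_conj_sinv_mul_sinv hg lam,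
    fun ψ _ hε => exists_inA_eLpNorm_sub_sinv_lt lam (Lp.memLp ψ) hε⟩

/-- The deformed involution J : f ↦ f* is an antiunitary from the GNS Hilbert
space ℋ to L²(ℝ²): it is antilinear, it satisfies (Jf, Jg)_{L²} = (g, f)_ℋ
= ω(g* ⋆ f), and its image of 𝒜 is dense in L²(ℝ²) (so it extends to a
bijection onto all of L²). -/
theorem stmt10 (lam : ℝ) (hlam : 0 < lam) :
    (∀ f g : ℝ × ℝ → ℂ, ∀ c : ℂ, InA f → InA g →
      sinv lam (fun x => c * f x + g x)
        = fun x => (starRingEnd ℂ) c * sinv lam f x + sinv lam g x) ∧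
    (∀ f g : ℝ × ℝ → ℂ, InA f → InA g →
      ∫ x : ℝ × ℝ, (starRingEnd ℂ) (sinv lam f x) * sinv lam g x
        = omegaW (sprod lam (sinv lam g) f)) ∧
    (∀ ψ : Lp ℂ 2 (volume : Measure (ℝ × ℝ)), ∀ ε : ℝ, 0 < ε →
      ∃ f : ℝ × ℝ → ℂ, InA f ∧
        eLpNorm (fun x => (ψ : ℝ × ℝ → ℂ) x - sinv lam f x) 2 volume
          < ENNReal.ofReal ε) :=
  stmt10_general lam
end

section
/- The weight ω satisfies the KMS condition at inverse temperature β = 1 with respect to the automorphism group σ_t(f)(x) = f(x₀ - λt, x₁): for f,g ∈ 𝒜 the function F(z) = ω(f ⋆ σ_z(g)) is entire (via the analytic extension of σ), bounded on the strip 0 ≤ Im z ≤ 1, and satisfies F(t+i) = ω(σ_t(g) ⋆ f) for all t ∈ ℝ. -/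
open MeasureTheory Complex

/-- The translation action σ_t(f)(x) = f(x₀ - λt, x₁). -/
def sigmaT (lam t : ℝ) (f : ℝ × ℝ → ℂ) : ℝ × ℝ → ℂ :=
  fun x => f (x.1 - lam * t, x.2)

/-!
Under `ω`, the integral over `x₀` turns `ω(f ⋆ k)` into a pairing of partial Fourier transforms,
`(2π)⁻¹ ∫ (𝓕₀f)(p₀, x₁) (𝓕₀k)(-p₀, e^{-λp₀}x₁) dp₀ dx₁`. The substitution
`(p₀, x₁) ↦ (-p₀, e^{-λp₀}x₁)` is an involution with Jacobian `e^{-λp₀}`, and it exchanges the two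
factors. A complex translation `σ_z` multiplies the pairing by `e^{iλp₀z}`. Since `𝓕₀g` has compact
support in `p₀`, this makes `ω(f ⋆ σ_z g)` an entire Fourier–Laplace transform, bounded on
horizontal strips. At `z + i` the additional factor `e^{-λp₀}` is exactly the Jacobian, so the
substitution produces `ω(σ_z g ⋆ f)`.
-/

open scoped FourierTransform

section FourierLaplace

variable {α : Type*} {u : α → ℝ} {K : α → ℂ} {R : ℝ}

lemma norm_exp_I_mul_mul_le (hK0 : ∀ a, R < |u a| → K a = 0) (w : ℂ) (a : α) :
    ‖exp (I * (u a : ℂ) * w) * K a‖ ≤ Real.exp (R * |w.im|) * ‖K a‖ := by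
  by_cases ha : R < |u a|
  · simp [hK0 a ha]
  rw [norm_mul, norm_exp, show (I * (u a : ℂ) * w).re = -(u a * w.im) by simp]
  gcongr
  calc -(u a * w.im) ≤ |u a| * |w.im| := (neg_le_abs _).trans_eq (abs_mul _ _)
    _ ≤ R * |w.im| := by gcongr; exact not_lt.1 ha

variable [MeasurableSpace α] {μ : Measure α}

lemma norm_integral_exp_I_mul_le (hK : Integrable K μ) (hK0 : ∀ a, R < |u a| → K a = 0) (w : ℂ) :
    ‖∫ a, exp (I * (u a : ℂ) * w) * K a ∂μ‖ ≤ Real.exp (R * |w.im|) * ∫ a, ‖K a‖ ∂μ := by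
  rw [← integral_const_mul]
  exact norm_integral_le_of_norm_le (hK.norm.const_mul _)
    (ae_of_all μ (norm_exp_I_mul_mul_le hK0 w))

lemma differentiable_integral_exp_I_mul (hu : Measurable u) (hK : Integrable K μ)
    (hK0 : ∀ a, R < |u a| → K a = 0) :
    Differentiable ℂ fun w : ℂ => ∫ a, exp (I * (u a : ℂ) * w) * K a ∂μ := by
  intro w₀
  have hmeas (w : ℂ) : AEStronglyMeasurable (fun a => exp (I * (u a : ℂ) * w) * K a) μ :=
    (Measurable.aestronglyMeasurable (by fun_prop)).mul hK.aestronglyMeasurable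
  have him {w : ℂ} (hw : w ∈ Metric.ball w₀ 1) : |w.im| ≤ ‖w₀‖ + 1 := by
    rw [mem_ball_iff_norm] at hw
    linarith [abs_im_le_norm w, norm_sub_norm_le w w₀]
  have hderiv_le (a : α) {w : ℂ} (hw : w ∈ Metric.ball w₀ 1) :
      ‖I * (u a : ℂ) * (exp (I * (u a : ℂ) * w) * K a)‖
        ≤ R * (Real.exp (R * (‖w₀‖ + 1)) * ‖K a‖) := by
    by_cases ha : R < |u a|
    · simp [hK0 a ha]
    · have hR : 0 ≤ R := (abs_nonneg _).trans (not_lt.1 ha)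
      rw [norm_mul]
      refine mul_le_mul (by simpa using ha) ((norm_exp_I_mul_mul_le hK0 w a).trans ?_)
        (norm_nonneg _) hR
      gcongr
      exact him hw
  have hderiv (a : α) (w : ℂ) : HasDerivAt (fun w => exp (I * (u a : ℂ) * w) * K a)
      (I * (u a : ℂ) * (exp (I * (u a : ℂ) * w) * K a)) w := by
    convert! (((hasDerivAt_id w).const_mul (I * (u a : ℂ))).cexp).mul_const (K a) using 1
    simp only [id, mul_one]
    ring
  exact (hasDerivAt_integral_of_dominated_loc_of_deriv_le (Metric.ball_mem_nhds w₀ one_pos)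
    (.of_forall hmeas)
    ((hK.norm.const_mul _).mono' (hmeas w₀) (ae_of_all μ (norm_exp_I_mul_mul_le hK0 w₀)))
    ((Measurable.aestronglyMeasurable (by fun_prop)).mul (hmeas w₀))
    (ae_of_all μ fun a _ hw => hderiv_le a hw) ((hK.norm.const_mul _).const_mul R)
    (ae_of_all μ fun a w _ => hderiv a w)).2.differentiableAt

lemma eq_of_differentiable_of_eq_ofReal {E : Type*} [NormedAddCommGroup E] [NormedSpace ℂ E]
    [CompleteSpace E] {φ ψ : ℂ → E} (hφ : Differentiable ℂ φ) (hψ : Differentiable ℂ ψ)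
    (h : ∀ x : ℝ, φ x = ψ x) : φ = ψ := by
  have htend : Filter.Tendsto (fun x : ℝ => (x : ℂ)) (nhdsWithin 0 {0}ᶜ) (nhdsWithin 0 {0}ᶜ) :=
    continuous_ofReal.continuousWithinAt.tendsto_nhdsWithin fun x hx => by simpa using hx
  exact AnalyticOnNhd.eq_of_frequently_eq (fun z _ => hφ.analyticAt z)
    (fun z _ => hψ.analyticAt z) (htend.frequently (.of_forall h))

end FourierLaplace

section PartialFourierTransform

lemma measurable_F0 {f : ℝ × ℝ → ℂ} (hf : Measurable f) : Measurable (F0 f) :=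
  (StronglyMeasurable.integral_prod_right (ν := volume)
    (f := fun (p : ℝ × ℝ) (y : ℝ) => exp (-I * (p.1 : ℂ) * (y : ℂ)) * f (y, p.2))
    (Measurable.stronglyMeasurable (by fun_prop))).measurable

lemma norm_F0_le {f : ℝ × ℝ → ℂ} {φ ψ : ℝ → ℝ} (hφ : Integrable φ)
    (hf : ∀ x, ‖f x‖ ≤ φ x.1 * ψ x.2) (p : ℝ × ℝ) : ‖F0 f p‖ ≤ (∫ y, φ y) * ψ p.2 := by
  rw [← integral_mul_const]
  refine norm_integral_le_of_norm_le (hφ.mul_const _) (ae_of_all _ fun y => ?_)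
  rw [norm_mul, norm_exp, show (-I * (p.1 : ℂ) * (y : ℂ)).re = 0 by simp, Real.exp_zero, one_mul]
  exact hf (y, p.2)

lemma F0_apply_eq_fourier (f : ℝ × ℝ → ℂ) (p y : ℝ) :
    F0 f (p, y) = 𝓕 (fun t => f (t, y)) ((2 * Real.pi)⁻¹ * p) := by
  rw [Real.fourier_real_eq_integral_exp_smul, F0]
  refine integral_congr_ae (ae_of_all _ fun t => ?_)
  simp only [smul_eq_mul]
  congr 2
  push_cast
  field_simp

lemma fourier_comp_inv_mul_left {E : Type*} [NormedAddCommGroup E] [NormedSpace ℂ E] (φ : ℝ → E)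
    {c : ℝ} (hc : c ≠ 0) (w : ℝ) : 𝓕 (fun t => φ (c⁻¹ * t)) w = |c| • 𝓕 φ (c * w) := by
  rw [Real.fourier_real_eq, Real.fourier_real_eq]
  have h := Measure.integral_comp_mul_left (fun t => 𝐞 (-(t * (c * w))) • φ t) c⁻¹
  rw [inv_inv] at h
  rw [← h]
  refine integral_congr_ae (ae_of_all _ fun t => ?_)
  simp only
  congr 3
  field_simp

end PartialFourierTransform

/-- The inverse Fourier transform on `ℝ × ℝ`, normalised as in `InA`. -/
noncomputable def invFT (h : ℝ × ℝ → ℂ) (x : ℝ × ℝ) : ℂ :=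
  (2 * Real.pi)⁻¹ • ∫ p : ℝ × ℝ,
    exp (I * ((p.1 : ℂ) * (x.1 : ℂ) + (p.2 : ℂ) * (x.2 : ℂ))) * h p

/-- The inverse Fourier transform in the second variable. It carries no factor `(2π)⁻¹`, so that
it is the partial Fourier transform `F0` of `invFT h`. -/
noncomputable def invFT₂ (h : ℝ × ℝ → ℂ) (p : ℝ × ℝ) : ℂ :=
  ∫ s : ℝ, exp (I * ((s : ℂ) * (p.2 : ℂ))) * h (p.1, s)

section Schwartz

lemma inv_one_add_sq_le_one (a : ℝ) : (1 + a ^ 2)⁻¹ ≤ 1 :=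
  inv_le_one_of_one_le₀ (le_add_of_nonneg_right (sq_nonneg a))

lemma exists_norm_schwartz_le {E : Type*} [NormedAddCommGroup E] [NormedSpace ℝ E]
    (s : SchwartzMap (ℝ × ℝ) E) :
    ∃ C : ℝ, 0 ≤ C ∧ ∀ x : ℝ × ℝ, ‖s x‖ ≤ C * (1 + x.1 ^ 2)⁻¹ * (1 + x.2 ^ 2)⁻¹ := by
  refine ⟨2 ^ 4 * (Finset.Iic ((4, 0) : ℕ × ℕ)).sup (fun m => SchwartzMap.seminorm ℝ m.1 m.2) s,
    by positivity, fun x => ?_⟩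
  have h := SchwartzMap.one_add_le_sup_seminorm_apply (𝕜 := ℝ) (m := (4, 0)) le_rfl le_rfl s x
  rw [norm_iteratedFDeriv_zero] at h
  have hsq {a : ℝ} (ha : |a| ≤ ‖x‖) : 1 + a ^ 2 ≤ (1 + ‖x‖) ^ 2 := by
    nlinarith [abs_nonneg a, sq_abs a]
  rw [← div_eq_mul_inv, le_div_iff₀ (by positivity), ← div_eq_mul_inv, le_div_iff₀ (by positivity)]
  calc ‖s x‖ * (1 + x.2 ^ 2) * (1 + x.1 ^ 2)
      ≤ ‖s x‖ * (1 + ‖x‖) ^ 2 * (1 + ‖x‖) ^ 2 := by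
        gcongr
        exacts [hsq (norm_snd_le x), hsq (norm_fst_le x)]
    _ = (1 + ‖x‖) ^ 4 * ‖s x‖ := by ring
    _ ≤ _ := h

lemma integrable_schwartz_slice {E : Type*} [NormedAddCommGroup E] [NormedSpace ℝ E]
    (s : SchwartzMap (ℝ × ℝ) E) (y : ℝ) : Integrable fun t : ℝ => s (t, y) := by
  obtain ⟨C, -, hC⟩ := exists_norm_schwartz_le s
  exact ((integrable_inv_one_add_sq.const_mul C).mul_const (1 + y ^ 2)⁻¹).mono'
    (Continuous.aestronglyMeasurable (by fun_prop)) (ae_of_all _ fun t => hC (t, y))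

lemma exists_schwartz_eq_invFT (h : SchwartzMap (ℝ × ℝ) ℂ) :
    ∃ s : SchwartzMap (ℝ × ℝ) ℂ, ⇑s = invFT h := by
  -- Mathlib's Fourier transform needs an inner product, which the sup-normed `ℝ × ℝ` lacks.
  let e : WithLp 2 (ℝ × ℝ) ≃L[ℝ] ℝ × ℝ := WithLp.prodContinuousLinearEquiv 2 ℝ ℝ ℝ
  let c : ℝ := (2 * Real.pi)⁻¹
  have hc : c ≠ 0 := by positivity
  let d : (ℝ × ℝ) ≃L[ℝ] ℝ × ℝ := ContinuousLinearEquiv.smulLeft (Units.mk0 c hc)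
  let φ : SchwartzMap (WithLp 2 (ℝ × ℝ)) ℂ := SchwartzMap.compCLMOfContinuousLinearEquiv ℝ e h
  refine ⟨c • SchwartzMap.compCLMOfContinuousLinearEquiv ℝ (d.trans e.symm) (𝓕⁻ φ), ?_⟩
  ext x
  rw [smul_apply, SchwartzMap.compCLMOfContinuousLinearEquiv_apply,
    SchwartzMap.fourierInv_coe, Function.comp_apply, Real.fourierInv_eq', invFT]
  congr 1
  rw [← (WithLp.volume_preserving_toLp ℝ ℝ).integral_comp
    (MeasurableEquiv.toLp 2 (ℝ × ℝ)).measurableEmbedding]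
  refine integral_congr_ae (ae_of_all _ fun p => ?_)
  have hinner : 2 * Real.pi * inner ℝ (WithLp.toLp 2 p) ((d.trans e.symm) x)
      = p.1 * x.1 + p.2 * x.2 := by
    rw [show (d.trans e.symm) x = WithLp.toLp 2 (c * x.1, c * x.2) from rfl,
      WithLp.prod_inner_apply]
    simp only [c, RCLike.inner_apply, conj_trivial]
    field_simp
  have hφ : φ (WithLp.toLp 2 p) = h p := rfl
  simp only [hinner, smul_eq_mul, hφ]
  congr 2
  push_cast
  ring

variable (s : SchwartzMap (ℝ × ℝ) ℂ)

lemma integrable_exp_mul_schwartz (y : ℝ) :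
    Integrable fun p : ℝ × ℝ => exp (I * ((p.2 : ℂ) * (y : ℂ))) * s p := by
  refine s.integrable.mono (Continuous.aestronglyMeasurable (by fun_prop))
    (ae_of_all _ fun p => ?_)
  rw [norm_mul, ← ofReal_mul, norm_exp_I_mul_ofReal, one_mul]

lemma continuous_invFT₂_slice (y : ℝ) : Continuous fun p : ℝ => invFT₂ s (p, y) := by
  obtain ⟨C, hC0, hC⟩ := exists_norm_schwartz_le s
  refine continuous_of_dominated (bound := fun t => C * (1 + t ^ 2)⁻¹)
    (fun p => Continuous.aestronglyMeasurable (by fun_prop)) (fun p => ae_of_all _ fun t => ?_)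
    (integrable_inv_one_add_sq.const_mul C) (ae_of_all _ fun t => by fun_prop)
  rw [norm_mul, ← ofReal_mul, norm_exp_I_mul_ofReal, one_mul]
  refine (hC (p, t)).trans ?_
  gcongr
  exact mul_le_of_le_one_right hC0 (inv_one_add_sq_le_one p)

lemma invFT_eq_integral_exp_mul (h : ℝ × ℝ → ℂ) (x : ℝ × ℝ) :
    invFT h x = (2 * Real.pi)⁻¹ • ∫ p : ℝ × ℝ, exp (I * (p.1 : ℂ) * (x.1 : ℂ)) *
      (exp (I * ((p.2 : ℂ) * (x.2 : ℂ))) * h p) := by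
  simp only [invFT, ← mul_assoc, ← exp_add, mul_add]

lemma invFT_eq_fourierInv (x : ℝ × ℝ) :
    invFT s x = (2 * Real.pi)⁻¹ •
      𝓕⁻ (fun p : ℝ => invFT₂ s (p, x.2)) ((2 * Real.pi)⁻¹ * x.1) := by
  have hint : Integrable fun p : ℝ × ℝ => exp (I * (p.1 : ℂ) * (x.1 : ℂ)) *
      (exp (I * ((p.2 : ℂ) * (x.2 : ℂ))) * s p) := by
    refine (integrable_exp_mul_schwartz s x.2).mono (Continuous.aestronglyMeasurable (by fun_prop))
      (ae_of_all _ fun p => ?_)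
    rw [norm_mul, mul_assoc I, ← ofReal_mul, norm_exp_I_mul_ofReal, one_mul]
  rw [invFT_eq_integral_exp_mul, Real.fourierInv_eq', Measure.volume_eq_prod,
    integral_prod _ hint]
  congr 1
  refine integral_congr_ae (ae_of_all _ fun p => ?_)
  have hinner : 2 * Real.pi * inner ℝ p ((2 * Real.pi)⁻¹ * x.1) = p * x.1 := by
    simp only [RCLike.inner_apply, conj_trivial]
    field_simp
  simp only [invFT₂, smul_eq_mul, integral_const_mul, hinner]
  congr 2
  push_cast
  ring

lemma F0_invFT : F0 (invFT s) = invFT₂ s := by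
  ext ⟨q, y⟩
  have hpi : 2 * Real.pi ≠ 0 := by positivity
  let P : ℝ → ℂ := fun p => invFT₂ s (p, y)
  have hP : Integrable P := (integrable_exp_mul_schwartz s y).integral_prod_left
  have hPinv : Integrable (𝓕⁻ P) := by
    obtain ⟨S, hS⟩ := exists_schwartz_eq_invFT s
    have hval : 𝓕⁻ P = fun w => (2 * Real.pi) • S (2 * Real.pi * w, y) := by
      ext w
      rw [hS, invFT_eq_fourierInv, smul_inv_smul₀ hpi, inv_mul_cancel_left₀ hpi]
    rw [hval]
    exact ((integrable_schwartz_slice S y).comp_mul_left' hpi).smul (2 * Real.pi)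
  have hPfour : Integrable (𝓕 P) := by
    simpa only [Real.fourierInv_eq_fourier_neg, neg_neg] using hPinv.comp_neg
  calc F0 (invFT s) (q, y)
      = 𝓕 (fun t => (2 * Real.pi)⁻¹ • 𝓕⁻ P ((2 * Real.pi)⁻¹ * t)) ((2 * Real.pi)⁻¹ * q) := by
        simp only [F0_apply_eq_fourier, invFT_eq_fourierInv, P]
    _ = 𝓕 (𝓕⁻ P) q := by
        rw [fourier_comp_inv_mul_left (fun t => (2 * Real.pi)⁻¹ • 𝓕⁻ P t) hpi,
          mul_inv_cancel_left₀ hpi, abs_of_pos (by positivity), Real.fourier_real_eq,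
          Real.fourier_real_eq, ← integral_smul]
        simp only [smul_comm _ (2 * Real.pi)⁻¹, inv_smul_smul₀ hpi]
    _ = P q := congrFun ((continuous_invFT₂_slice s y).fourier_fourierInv_eq hP hPfour) q

end Schwartz

section Twist

/-- The involution `(p₀, x₁) ↦ (-p₀, e^{-λp₀}x₁)`: the momentum-space substitution that exchanges
the two factors of a star product under `ω`. -/
noncomputable def starFlip (lam : ℝ) : ℝ × ℝ ≃ᵐ ℝ × ℝ :=
  MeasurableEquiv.ofInvolutive (fun p => (-p.1, Real.exp (-lam * p.1) * p.2))
    (fun p => by simp [← mul_assoc, ← Real.exp_add]) (by fun_prop)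

lemma starFlip_apply (lam : ℝ) (p : ℝ × ℝ) :
    starFlip lam p = (-p.1, Real.exp (-lam * p.1) * p.2) := rfl

lemma starFlip_starFlip (lam : ℝ) (p : ℝ × ℝ) : starFlip lam (starFlip lam p) = p :=
  (starFlip lam).symm_apply_apply p

lemma ofReal_mul_lintegral_comp_mul_left {c : ℝ} (hc : 0 < c) {φ : ℝ → ENNReal}
    (hφ : Measurable φ) : ENNReal.ofReal c * ∫⁻ y, φ (c * y) = ∫⁻ y, φ y := by
  rw [← lintegral_map hφ (measurable_const_mul c), Real.map_volume_mul_left hc.ne',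
    lintegral_smul_measure, smul_eq_mul, ← mul_assoc, ← ENNReal.ofReal_mul hc.le,
    abs_of_pos (inv_pos.2 hc), mul_inv_cancel₀ hc.ne', ENNReal.ofReal_one, one_mul]

lemma measurePreserving_starFlip (lam : ℝ) :
    MeasurePreserving (starFlip lam)
      (volume.withDensity fun p => ENNReal.ofReal (Real.exp (-lam * p.1))) volume := by
  refine ⟨(starFlip lam).measurable, Measure.ext_of_lintegral _ fun φ hφ => ?_⟩
  have hdens : Measurable fun p : ℝ × ℝ => ENNReal.ofReal (Real.exp (-lam * p.1)) := by fun_prop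
  have hφflip : Measurable fun p => φ (starFlip lam p) := hφ.comp (starFlip lam).measurable
  rw [lintegral_map hφ (starFlip lam).measurable,
    lintegral_withDensity_eq_lintegral_mul _ hdens hφflip, Measure.volume_eq_prod,
    lintegral_prod _ (hdens.mul hφflip).aemeasurable, lintegral_prod _ hφ.aemeasurable]
  calc ∫⁻ p, ∫⁻ y, ENNReal.ofReal (Real.exp (-lam * p)) * φ (-p, Real.exp (-lam * p) * y)
      = ∫⁻ p, ∫⁻ y, φ (-p, y) := by
        refine lintegral_congr fun p => ?_
        rw [lintegral_const_mul _ (by fun_prop),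
          ofReal_mul_lintegral_comp_mul_left (Real.exp_pos _) (φ := fun y => φ (-p, y))
            (by fun_prop)]
    _ = ∫⁻ p, ∫⁻ y, φ (p, y) :=
        (Measure.measurePreserving_neg volume).lintegral_comp
          (f := fun p => ∫⁻ y, φ (p, y)) hφ.lintegral_prod_right'

lemma integral_exp_smul_comp_starFlip {E : Type*} [NormedAddCommGroup E] [NormedSpace ℝ E]
    (lam : ℝ) (G : ℝ × ℝ → E) :
    ∫ p, Real.exp (-lam * p.1) • G (starFlip lam p) = ∫ p, G p := by
  rw [← (measurePreserving_starFlip lam).integral_comp (starFlip lam).measurableEmbedding G,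
    integral_withDensity_eq_integral_toReal_smul (by fun_prop) (by simp)]
  simp only [ENNReal.toReal_ofReal (Real.exp_pos _).le]

end Twist

section StarPairing

/-- The functions for which `ω (f ⋆ k)` converges absolutely as a triple integral; the bound by
an integrable function of the first variable alone is uniform in the second, since the star
product dilates the second variable. -/
structure StarAdmissible (f : ℝ × ℝ → ℂ) : Prop where
  measurable : Measurable f
  exists_integrable_bound : ∃ φ : ℝ → ℝ, Integrable φ ∧ ∀ x, ‖f x‖ ≤ φ x.1
  integrable_F0 : Integrable (F0 f)

/-- The integrand of `ω (f ⋆ k)` in momentum space, once the integral over `x₀` is carried out. -/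
noncomputable def starPairing (lam : ℝ) (f k : ℝ × ℝ → ℂ) (p : ℝ × ℝ) : ℂ :=
  F0 f p * F0 k (starFlip lam p)

variable (lam : ℝ) {f k : ℝ × ℝ → ℂ}

lemma starPairing_comp_starFlip (f k : ℝ × ℝ → ℂ) (p : ℝ × ℝ) :
    starPairing lam k f (starFlip lam p) = starPairing lam f k p := by
  rw [starPairing, starPairing, starFlip_starFlip, mul_comm]

lemma starPairing_eq_zero {R : ℝ} (hk : ∀ p : ℝ × ℝ, R < |p.1| → F0 k p = 0) (f : ℝ × ℝ → ℂ)
    (p : ℝ × ℝ) (hp : R < |p.1|) : starPairing lam f k p = 0 := by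
  rw [starPairing, hk _ (by rwa [starFlip_apply, abs_neg]), mul_zero]

lemma integral_star_integrand (f k : ℝ × ℝ → ℂ) (p : ℝ × ℝ) :
    ∫ x : ℝ, exp (I * (p.1 : ℂ) * (x : ℂ)) * F0 f p * k (x, Real.exp (-lam * p.1) * p.2)
      = starPairing lam f k p := by
  rw [starPairing, starFlip_apply, F0.eq_def k, ← integral_const_mul]
  refine integral_congr_ae (ae_of_all _ fun x => ?_)
  simp only [ofReal_neg, neg_mul_neg]
  ring

namespace StarAdmissible

lemma integrable_star_integrand (hf : StarAdmissible f) (hk : StarAdmissible k) :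
    Integrable fun q : (ℝ × ℝ) × ℝ => exp (I * (q.1.1 : ℂ) * (q.2 : ℂ))
      * F0 f q.1 * k (q.2, Real.exp (-lam * q.1.1) * q.1.2) := by
  obtain ⟨φ, hφ, hkφ⟩ := hk.exists_integrable_bound
  have hF0 := measurable_F0 hf.measurable
  have hkm := hk.measurable
  refine (hf.integrable_F0.norm.mul_prod hφ).mono' (Measurable.aestronglyMeasurable (by fun_prop))
    (ae_of_all _ fun q => ?_)
  rw [norm_mul, norm_mul, mul_assoc I, ← ofReal_mul, norm_exp_I_mul_ofReal, one_mul]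
  gcongr
  exact hkφ _

lemma integrable_starPairing (hf : StarAdmissible f) (hk : StarAdmissible k) :
    Integrable (starPairing lam f k) := by
  simpa only [integral_star_integrand] using
    (hf.integrable_star_integrand lam hk).integral_prod_left

end StarAdmissible

lemma integral_integral_swap_fst {α β γ E : Type*} [MeasurableSpace α] [MeasurableSpace β]
    [MeasurableSpace γ] [NormedAddCommGroup E] [NormedSpace ℝ E] {μ : Measure α} {ν : Measure β}
    {τ : Measure γ} [SFinite μ] [SFinite ν] [SFinite τ] {Ψ : (γ × β) × α → E}
    (hΨ : Integrable Ψ ((τ.prod ν).prod μ)) :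
    ∫ x, ∫ c, Ψ ((c, x.2), x.1) ∂τ ∂μ.prod ν = ∫ p, ∫ a, Ψ (p, a) ∂μ ∂τ.prod ν := by
  let e : (α × β) × γ ≃ᵐ (γ × β) × α :=
    (MeasurableEquiv.prodComm.trans
      ((MeasurableEquiv.refl γ).prodCongr MeasurableEquiv.prodComm)).trans
      MeasurableEquiv.prodAssoc.symm
  have he : MeasurePreserving e ((μ.prod ν).prod τ) ((τ.prod ν).prod μ) :=
    (Measure.measurePreserving_swap.trans
      ((MeasurePreserving.id τ).prod Measure.measurePreserving_swap)).trans
      (measurePreserving_prodAssoc τ ν μ).symm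
  calc ∫ x, ∫ c, Ψ (e (x, c)) ∂τ ∂μ.prod ν = ∫ q, Ψ (e q) ∂(μ.prod ν).prod τ :=
        (integral_prod _ (he.integrable_comp_of_integrable hΨ)).symm
    _ = ∫ q, Ψ q ∂(τ.prod ν).prod μ := he.integral_comp' Ψ
    _ = ∫ p, ∫ a, Ψ (p, a) ∂μ ∂τ.prod ν := integral_prod _ hΨ

lemma omegaW_sprod (hf : StarAdmissible f) (hk : StarAdmissible k) :
    omegaW (sprod lam f k) = (2 * Real.pi)⁻¹ • ∫ p, starPairing lam f k p := by
  simp only [omegaW, sprod, ← integral_star_integrand]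
  rw [integral_smul]
  exact congrArg _ (integral_integral_swap_fst (hf.integrable_star_integrand lam hk))

end StarPairing

section SchwartzMultiplier

lemma exists_hasTemperateGrowth_eq_of_abs_le {E : Type*} [NormedAddCommGroup E] [NormedSpace ℝ E]
    {e : ℝ → E} (he : ContDiff ℝ (⊤ : ℕ∞) e) (R : ℝ) :
    ∃ u : ℝ → E, u.HasTemperateGrowth ∧ ∀ t, |t| ≤ R → u t = e t := by
  let χ : ContDiffBump (0 : ℝ) := ⟨|R| + 1, |R| + 2, by positivity, by linarith⟩
  refine ⟨fun t => χ t • e t, χ.hasCompactSupport.smul_right.hasTemperateGrowth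
    (χ.contDiff.smul he), fun t ht => ?_⟩
  have hχ : χ t = 1 := χ.one_of_mem_closedBall <| by
    rw [mem_closedBall_zero_iff, Real.norm_eq_abs]
    exact ht.trans ((le_abs_self R).trans (le_add_of_nonneg_right zero_le_one))
  simp only [hχ, one_smul]

lemma exists_schwartz_eq_exp_mul {h : SchwartzMap (ℝ × ℝ) ℂ} {R : ℝ}
    (hR : ∀ p : ℝ × ℝ, R < |p.1| → h p = 0) (w : ℂ) :
    ∃ s : SchwartzMap (ℝ × ℝ) ℂ, ∀ p : ℝ × ℝ, s p = exp (I * (p.1 : ℂ) * w) * h p := by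
  have he : ContDiff ℝ (⊤ : ℕ∞) fun t : ℝ => exp (I * (t : ℂ) * w) :=
    ((contDiff_const.mul ofRealCLM.contDiff).mul contDiff_const).cexp
  obtain ⟨u, hu, hue⟩ := exists_hasTemperateGrowth_eq_of_abs_le he R
  have hu_fst : Function.HasTemperateGrowth fun p : ℝ × ℝ => u p.1 :=
    hu.comp (ContinuousLinearMap.fst ℝ ℝ ℝ).hasTemperateGrowth
  refine ⟨SchwartzMap.smulLeftCLM ℂ (fun p : ℝ × ℝ => u p.1) h, fun p => ?_⟩
  rw [SchwartzMap.smulLeftCLM_apply_apply hu_fst, smul_eq_mul]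
  by_cases hp : R < |p.1|
  · rw [hR p hp, mul_zero, mul_zero]
  · rw [hue _ (not_lt.1 hp)]

end SchwartzMultiplier

namespace InA

variable {f : ℝ × ℝ → ℂ}

lemma exists_schwartz_eq (hf : InA f) : ∃ s : SchwartzMap (ℝ × ℝ) ℂ, ⇑s = f := by
  obtain ⟨h, -, hfh⟩ := hf
  rw [show f = invFT h from funext hfh]
  exact exists_schwartz_eq_invFT h

lemma exists_F0_eq_zero (hf : InA f) : ∃ R : ℝ, ∀ p : ℝ × ℝ, R < |p.1| → F0 f p = 0 := by
  obtain ⟨h, ⟨R, hR⟩, hfh⟩ := hf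
  refine ⟨R, fun p hp => ?_⟩
  rw [show f = invFT h from funext hfh, F0_invFT]
  simp only [invFT₂, fun t : ℝ => hR (p.1, t) hp, mul_zero, integral_zero]

lemma starAdmissible (hf : InA f) : StarAdmissible f := by
  obtain ⟨R, hR⟩ := hf.exists_F0_eq_zero
  obtain ⟨s, rfl⟩ := hf.exists_schwartz_eq
  obtain ⟨C, hC0, hC⟩ := exists_norm_schwartz_le s
  have hφ : Integrable fun y : ℝ => C * (1 + y ^ 2)⁻¹ := integrable_inv_one_add_sq.const_mul C
  refine ⟨s.continuous.measurable, ⟨_, hφ, fun x => (hC x).trans ?_⟩, ?_⟩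
  · exact mul_le_of_le_one_right (by positivity) (inv_one_add_sq_le_one x.2)
  · have hind : Integrable ((Set.Icc (-R) R).indicator fun _ => ∫ y : ℝ, C * (1 + y ^ 2)⁻¹) :=
      (integrable_indicator_iff measurableSet_Icc).2 (integrableOn_const (by simp))
    refine (hind.mul_prod integrable_inv_one_add_sq).mono'
      (measurable_F0 s.continuous.measurable).aestronglyMeasurable (ae_of_all _ fun p => ?_)
    by_cases hp : p.1 ∈ Set.Icc (-R) R
    · rw [Set.indicator_of_mem hp]
      exact norm_F0_le (ψ := fun y => (1 + y ^ 2)⁻¹) hφ hC p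
    · rw [hR p (not_le.1 fun h => hp (abs_le.1 h)), Set.indicator_of_notMem hp, norm_zero, zero_mul]

end InA

section ComplexTranslation

/-- `gC` is the extension of `g` to an entire function of the first variable. -/
structure IsEntireExtension (gC : ℂ → ℝ → ℂ) (g : ℝ × ℝ → ℂ) : Prop where
  apply_ofReal : ∀ x : ℝ × ℝ, gC (x.1 : ℂ) x.2 = g x
  differentiable : ∀ x1 : ℝ, Differentiable ℂ fun z => gC z x1

/-- The translate of `g` by `w ∈ ℂ` in the first variable, in terms of its entire extension `gC`;
thus `σ_z g` is `complexTranslate gC (λz)`. -/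
def complexTranslate (gC : ℂ → ℝ → ℂ) (w : ℂ) : ℝ × ℝ → ℂ :=
  fun x => gC ((x.1 : ℂ) - w) x.2

variable {g : ℝ × ℝ → ℂ} {gC : ℂ → ℝ → ℂ}

lemma entire_extension_eq_integral {h : SchwartzMap (ℝ × ℝ) ℂ} {R : ℝ}
    (hR : ∀ p : ℝ × ℝ, R < |p.1| → h p = 0) {φ : ℂ → ℂ} (hφ : Differentiable ℂ φ) {y : ℝ}
    (hext : ∀ x : ℝ, φ x = invFT h (x, y)) (w : ℂ) :
    φ w = (2 * Real.pi)⁻¹ • ∫ p : ℝ × ℝ, exp (I * (p.1 : ℂ) * w) *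
      (exp (I * ((p.2 : ℂ) * (y : ℂ))) * h p) := by
  have hdiff := (differentiable_integral_exp_I_mul measurable_fst (integrable_exp_mul_schwartz h y)
    (R := R) fun p hp => by rw [hR p hp, mul_zero]).const_smul (2 * Real.pi)⁻¹
  refine congrFun (eq_of_differentiable_of_eq_ofReal hφ hdiff fun x => ?_) w
  rw [hext, invFT_eq_integral_exp_mul]
  rfl

lemma complexTranslate_eq_invFT {h s : SchwartzMap (ℝ × ℝ) ℂ} {R : ℝ}
    (hR : ∀ p : ℝ × ℝ, R < |p.1| → h p = 0)
    (hgC : IsEntireExtension gC (invFT h)) {w : ℂ}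
    (hs : ∀ p : ℝ × ℝ, s p = exp (I * (p.1 : ℂ) * -w) * h p) :
    complexTranslate gC w = invFT s := by
  ext x
  rw [complexTranslate, entire_extension_eq_integral hR (hgC.differentiable x.2)
    (fun t => hgC.apply_ofReal (t, x.2)), invFT_eq_integral_exp_mul]
  congr 1
  refine integral_congr_ae (ae_of_all _ fun p => ?_)
  simp only [hs, sub_eq_add_neg, mul_add, exp_add]
  ring

lemma inA_complexTranslate (hg : InA g) (hgC : IsEntireExtension gC g) (w : ℂ) :
    InA (complexTranslate gC w) := by
  obtain ⟨h, ⟨R, hR⟩, hgh⟩ := hg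
  obtain rfl : g = invFT h := funext hgh
  obtain ⟨s, hs⟩ := exists_schwartz_eq_exp_mul hR (-w)
  exact ⟨s, ⟨R, fun p hp => by rw [hs, hR p hp, mul_zero]⟩,
    congrFun (complexTranslate_eq_invFT hR hgC hs)⟩

lemma F0_complexTranslate (hg : InA g) (hgC : IsEntireExtension gC g) (w : ℂ) (p : ℝ × ℝ) :
    F0 (complexTranslate gC w) p = exp (-I * (p.1 : ℂ) * w) * F0 g p := by
  obtain ⟨h, ⟨R, hR⟩, hgh⟩ := hg
  obtain rfl : g = invFT h := funext hgh
  obtain ⟨s, hs⟩ := exists_schwartz_eq_exp_mul hR (-w)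
  rw [complexTranslate_eq_invFT hR hgC hs, F0_invFT, F0_invFT, invFT₂, invFT₂, ← integral_const_mul]
  refine integral_congr_ae (ae_of_all _ fun t => ?_)
  simp only [hs, mul_neg, neg_mul]
  ring

end ComplexTranslation

section KMS

variable (lam : ℝ) {f g : ℝ × ℝ → ℂ} {gC : ℂ → ℝ → ℂ}

lemma starPairing_complexTranslate (f : ℝ × ℝ → ℂ) (hg : InA g)
    (hgC : IsEntireExtension gC g) (w : ℂ) (p : ℝ × ℝ) :
    starPairing lam f (complexTranslate gC w) p
      = exp (I * (p.1 : ℂ) * w) * starPairing lam f g p := by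
  rw [starPairing, starPairing, F0_complexTranslate hg hgC, starFlip_apply, ofReal_neg, neg_mul_neg,
    mul_left_comm]

lemma omegaW_sprod_complexTranslate (hf : StarAdmissible f) (hg : InA g)
    (hgC : IsEntireExtension gC g) (w : ℂ) :
    omegaW (sprod lam f (complexTranslate gC w))
      = (2 * Real.pi)⁻¹ • ∫ p : ℝ × ℝ, exp (I * (p.1 : ℂ) * w) * starPairing lam f g p := by
  simp only [omegaW_sprod lam hf (inA_complexTranslate hg hgC w).starAdmissible,
    starPairing_complexTranslate lam f hg hgC]

lemma differentiable_omegaW_sprod_complexTranslate (hf : StarAdmissible f) (hg : InA g)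
    (hgC : IsEntireExtension gC g) :
    Differentiable ℂ fun w : ℂ => omegaW (sprod lam f (complexTranslate gC w)) := by
  obtain ⟨R, hR⟩ := hg.exists_F0_eq_zero
  simp only [omegaW_sprod_complexTranslate lam hf hg hgC]
  exact (differentiable_integral_exp_I_mul measurable_fst
    (hf.integrable_starPairing lam hg.starAdmissible)
    (starPairing_eq_zero lam hR f)).const_smul (2 * Real.pi)⁻¹

lemma exists_norm_omegaW_sprod_complexTranslate_le (hf : StarAdmissible f) (hg : InA g)
    (hgC : IsEntireExtension gC g) (c : ℝ) :
    ∃ M : ℝ, ∀ w : ℂ, |w.im| ≤ c →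
      ‖omegaW (sprod lam f (complexTranslate gC w))‖ ≤ M := by
  obtain ⟨R, hR⟩ := hg.exists_F0_eq_zero
  refine ⟨‖(2 * Real.pi)⁻¹‖ * (Real.exp (|R| * c) * ∫ p, ‖starPairing lam f g p‖),
    fun w hw => ?_⟩
  rw [omegaW_sprod_complexTranslate lam hf hg hgC, norm_smul]
  gcongr
  refine (norm_integral_exp_I_mul_le (hf.integrable_starPairing lam hg.starAdmissible)
    (starPairing_eq_zero lam hR f) w).trans ?_
  gcongr
  exact le_abs_self R

lemma omegaW_sprod_complexTranslate_add_I (hf : StarAdmissible f) (hg : InA g)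
    (hgC : IsEntireExtension gC g) (w : ℂ) :
    omegaW (sprod lam f (complexTranslate gC (w + lam * I)))
      = omegaW (sprod lam (complexTranslate gC w) f) := by
  let k := complexTranslate gC w
  have hexp (p : ℝ) : exp (I * (p : ℂ) * (w + lam * I))
      = Real.exp (-lam * p) * exp (I * (p : ℂ) * w) := by
    rw [ofReal_exp, ← exp_add]
    congr 1
    push_cast
    linear_combination (lam * p : ℂ) * I_sq
  rw [omegaW_sprod_complexTranslate lam hf hg hgC,
    omegaW_sprod lam (inA_complexTranslate hg hgC w).starAdmissible hf]
  congr 1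
  calc ∫ p : ℝ × ℝ, exp (I * (p.1 : ℂ) * (w + lam * I)) * starPairing lam f g p
      = ∫ p, Real.exp (-lam * p.1) • starPairing lam f k p := by
        simp only [k, starPairing_complexTranslate lam f hg hgC, hexp, real_smul, ← mul_assoc]
    _ = ∫ p, Real.exp (-lam * p.1) • starPairing lam k f (starFlip lam p) := by
        simp only [starPairing_comp_starFlip]
    _ = ∫ p, starPairing lam k f p :=
        integral_exp_smul_comp_starFlip lam (starPairing lam k f)

lemma sigmaT_eq_complexTranslate (hgC : IsEntireExtension gC g) (t : ℝ) :
    sigmaT lam t g = complexTranslate gC (lam * t) := by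
  ext x
  rw [sigmaT, complexTranslate, ← hgC.apply_ofReal]
  push_cast
  rfl

end KMS

theorem stmt12_general (lam : ℝ) {f g : ℝ × ℝ → ℂ} (hf : StarAdmissible f) (hg : InA g)
    {gC : ℂ → ℝ → ℂ} (hgC : IsEntireExtension gC g) :
    Differentiable ℂ (fun z : ℂ =>
      omegaW (sprod lam f (fun x => gC ((x.1 : ℂ) - lam * z) x.2))) ∧
    (∃ M : ℝ, ∀ z : ℂ, 0 ≤ z.im → z.im ≤ 1 →
      ‖omegaW (sprod lam f (fun x => gC ((x.1 : ℂ) - lam * z) x.2))‖ ≤ M) ∧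
    (∀ t : ℝ,
      omegaW (sprod lam f (fun x => gC ((x.1 : ℂ) - lam * ((t : ℂ) + Complex.I)) x.2))
        = omegaW (sprod lam (sigmaT lam t g) f)) := by
  refine ⟨?_, ?_, fun t => ?_⟩
  · exact (differentiable_omegaW_sprod_complexTranslate lam hf hg hgC).comp
      (differentiable_id.const_mul (lam : ℂ))
  · obtain ⟨M, hM⟩ := exists_norm_omegaW_sprod_complexTranslate_le lam hf hg hgC |lam|
    refine ⟨M, fun z h0 h1 => hM _ ?_⟩
    rw [im_ofReal_mul, abs_mul, abs_of_nonneg h0]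
    exact mul_le_of_le_one_right (abs_nonneg lam) h1
  · rw [mul_add, sigmaT_eq_complexTranslate lam hgC]
    exact omegaW_sprod_complexTranslate_add_I lam hf hg hgC (lam * t)

/-- The weight ω satisfies the KMS condition at inverse temperature β = 1 with
respect to σ_t: for f, g ∈ 𝒜 (g with entire extension gC in the first
variable), the function F(z) = ω(f ⋆ σ_z(g)) is entire, bounded on the strip
0 ≤ Im z ≤ 1, and satisfies F(t+i) = ω(σ_t(g) ⋆ f) for all real t. -/
theorem stmt12 (lam : ℝ) (hlam : 0 < lam) (f g : ℝ × ℝ → ℂ)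
    (hf : InA f) (hg : InA g)
    (gC : ℂ → ℝ → ℂ)
    (hext : ∀ x : ℝ × ℝ, gC (x.1 : ℂ) x.2 = g x)
    (hent : ∀ x1 : ℝ, Differentiable ℂ fun z => gC z x1) :
    Differentiable ℂ (fun z : ℂ =>
      omegaW (sprod lam f (fun x => gC ((x.1 : ℂ) - lam * z) x.2))) ∧
    (∃ M : ℝ, ∀ z : ℂ, 0 ≤ z.im → z.im ≤ 1 →
      ‖omegaW (sprod lam f (fun x => gC ((x.1 : ℂ) - lam * z) x.2))‖ ≤ M) ∧
    (∀ t : ℝ,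
      omegaW (sprod lam f (fun x => gC ((x.1 : ℂ) - lam * ((t : ℂ) + Complex.I)) x.2))
        = omegaW (sprod lam (sigmaT lam t g) f)) :=
  stmt12_general lam hf.starAdmissible hg ⟨hext, hent⟩
end
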